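/- Let B be an open subset of the half-plane ℍ = {(H,r) ∈ ℝ² : r > 0}, let ξ = (ξ₁,ξ₂) : B → ℝ² be C¹, and let μ : B → ℝ² be a C¹ diffeomorphism onto an open set U ⊆ ℝ² whose Jacobian matrix at each (H,r) ∈ B equals r·[[∂ξ₂/∂r, −∂ξ₂/∂H], [−∂ξ₁/∂r, ∂ξ₁/∂H]]. Let u : U → ℝ be a C² function whose gradient satisfies ∇u = ξ ∘ μ⁻¹ on U. Then for every x ∈ U the Hessian matrix of u at x equals ( Dξ · Dξᵗ / ( r · det Dξ ) ) evaluated at μ⁻¹(x), where Dξ is the 2×2 matrix with rows (∂ξ₁/∂H, ∂ξ₁/∂r) and (∂ξ₂/∂H, ∂ξ₂/∂r). -/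

import Mathlib

/-!
Read the gradient as the covector field `du = ξ ∘ μ⁻¹`, so that `Hess u = Dξ · D(μ⁻¹)` by the chain
rule. The prescribed Jacobian of `μ` is `r` times the cofactor matrix `(adj Dξ)ᵀ`, and
`Dξᵀ · (adj Dξ)ᵀ = det Dξ • 1`; hence `D(μ⁻¹) = (Dμ)⁻¹ = Dξᵀ / (r det Dξ)`.
-/

open Matrix

/-- Partial derivative in the first (`H`) direction of a function on `ℝ × ℝ`. -/
noncomputable def pdH (f : ℝ × ℝ → ℝ) (p : ℝ × ℝ) : ℝ := fderiv ℝ f p (1, 0)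

/-- Partial derivative in the second (`r`) direction of a function on `ℝ × ℝ`. -/
noncomputable def pdr (f : ℝ × ℝ → ℝ) (p : ℝ × ℝ) : ℝ := fderiv ℝ f p (0, 1)

/-- The matrix `Dξ` with rows `(∂ξ₁/∂H, ∂ξ₁/∂r)` and `(∂ξ₂/∂H, ∂ξ₂/∂r)`. -/
noncomputable def Dxi (ξ₁ ξ₂ : ℝ × ℝ → ℝ) (p : ℝ × ℝ) : Matrix (Fin 2) (Fin 2) ℝ :=
  !![pdH ξ₁ p, pdr ξ₁ p; pdH ξ₂ p, pdr ξ₂ p]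

section CofactorInverse

variable {n : Type*} [Fintype n] [DecidableEq n]

theorem transpose_mul_smul_adjugate_transpose {R : Type*} [CommRing R] (A : Matrix n n R) (c : R) :
    Aᵀ * (c • A.adjugateᵀ) = (c * A.det) • 1 := by
  rw [mul_smul_comm, ← transpose_mul, adjugate_mul, transpose_smul, transpose_one, smul_smul]

theorem eq_inv_smul_transpose_of_smul_adjugate_transpose_mul_eq_one [Nontrivial n]
    {K : Type*} [Field K] {A N : Matrix n n K} {c : K} (h : (c • A.adjugateᵀ) * N = 1) :
    N = (c * A.det)⁻¹ • Aᵀ := by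
  have hA : Aᵀ = (c * A.det) • N := by
    rw [← mul_one Aᵀ, ← h, ← mul_assoc, transpose_mul_smul_adjugate_transpose, smul_mul_assoc,
      one_mul]
  have hdet : c * A.det ≠ 0 := by
    intro hzero
    have hA0 : A = 0 := transpose_eq_zero.mp (by rw [hA, hzero, zero_smul])
    simp [hA0] at h
  rw [hA, inv_smul_smul₀ hdet]

end CofactorInverse

section Hessian

open Module Filter Topology

variable {𝕜 E n : Type*} [NontriviallyNormedField 𝕜] [NormedAddCommGroup E] [NormedSpace 𝕜 E]

/-- The Jacobian matrix of a covector field `ω` at `p` in the basis `b`: its entry `(i, j)` is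
`∂ωᵢ/∂xⱼ`, where `ωᵢ = ω (b i)`. For `ω = fderiv 𝕜 u` it is the Hessian matrix of `u`. -/
noncomputable def covectorJacobian (b : Basis n 𝕜 E) (ω : E → E →L[𝕜] 𝕜) (p : E) :
    Matrix n n 𝕜 :=
  Matrix.of fun i j => fderiv 𝕜 ω p (b j) (b i)

theorem covectorJacobian_congr {b : Basis n 𝕜 E} {ω η : E → E →L[𝕜] 𝕜} {p : E}
    (h : ω =ᶠ[𝓝 p] η) : covectorJacobian b ω p = covectorJacobian b η p := by
  rw [covectorJacobian, h.fderiv_eq, covectorJacobian]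

variable [Fintype n] [DecidableEq n]

theorem covectorJacobian_comp (b : Basis n 𝕜 E) {ω : E → E →L[𝕜] 𝕜} {σ : E → E} {x : E}
    (hω : DifferentiableAt 𝕜 ω (σ x)) (hσ : DifferentiableAt 𝕜 σ x) :
    covectorJacobian b (ω ∘ σ) x =
      covectorJacobian b ω (σ x) * LinearMap.toMatrix b b (fderiv 𝕜 σ x) := by
  ext i j
  calc covectorJacobian b (ω ∘ σ) x i j
      = fderiv 𝕜 ω (σ x) (fderiv 𝕜 σ x (b j)) (b i) := by
        rw [covectorJacobian, of_apply, fderiv_comp x hω hσ, ContinuousLinearMap.comp_apply]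
    _ = fderiv 𝕜 ω (σ x) (∑ k, b.repr (fderiv 𝕜 σ x (b j)) k • b k) (b i) := by
        rw [b.sum_repr]
    _ = (covectorJacobian b ω (σ x) * LinearMap.toMatrix b b (fderiv 𝕜 σ x)) i j := by
        simp only [map_sum, map_smul, _root_.sum_apply, _root_.smul_apply, smul_eq_mul,
          covectorJacobian, mul_apply, of_apply, LinearMap.toMatrix_apply,
          ContinuousLinearMap.coe_coe, mul_comm]

theorem toMatrix_fderiv_mul_toMatrix_fderiv_eq_one (b : Basis n 𝕜 E) {μ σ : E → E} {x : E}
    (hμ : DifferentiableAt 𝕜 μ (σ x)) (hσ : DifferentiableAt 𝕜 σ x) (hμσ : μ ∘ σ =ᶠ[𝓝 x] id) :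
    LinearMap.toMatrix b b (fderiv 𝕜 μ (σ x)) * LinearMap.toMatrix b b (fderiv 𝕜 σ x) = 1 := by
  rw [← LinearMap.toMatrix_comp, ← ContinuousLinearMap.toLinearMap_comp, ← fderiv_comp x hμ hσ,
    hμσ.fderiv_eq, fderiv_id, ContinuousLinearMap.coe_id, LinearMap.toMatrix_id]

theorem hessian_formula_general [Nontrivial n] (b : Basis n 𝕜 E) {ξ : E → E →L[𝕜] 𝕜}
    {μ σ : E → E} {u : E → 𝕜} {x : E} {c : 𝕜}
    (hξ : DifferentiableAt 𝕜 ξ (σ x)) (hμ : DifferentiableAt 𝕜 μ (σ x))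
    (hσ : DifferentiableAt 𝕜 σ x) (hμσ : μ ∘ σ =ᶠ[𝓝 x] id)
    (hJac : LinearMap.toMatrix b b (fderiv 𝕜 μ (σ x)) =
      c • (covectorJacobian b ξ (σ x)).adjugateᵀ)
    (hgrad : ∀ᶠ y in 𝓝 x, HasFDerivAt u (ξ (σ y)) y) :
    covectorJacobian b (fderiv 𝕜 u) x =
      (c * (covectorJacobian b ξ (σ x)).det)⁻¹ •
        (covectorJacobian b ξ (σ x) * (covectorJacobian b ξ (σ x))ᵀ) := by
  have hdu : fderiv 𝕜 u =ᶠ[𝓝 x] ξ ∘ σ := hgrad.mono fun _ hy => hy.fderiv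
  have hDσ : LinearMap.toMatrix b b (fderiv 𝕜 σ x) =
      (c * (covectorJacobian b ξ (σ x)).det)⁻¹ • (covectorJacobian b ξ (σ x))ᵀ :=
    eq_inv_smul_transpose_of_smul_adjugate_transpose_mul_eq_one
      (hJac ▸ toMatrix_fderiv_mul_toMatrix_fderiv_eq_one b hμ hσ hμσ)
  rw [covectorJacobian_congr hdu, covectorJacobian_comp b hξ hσ, hDσ, mul_smul_comm]

end Hessian

section Plane

open Module

/-- The covector field `ξ₁ dH + ξ₂ dr` on the plane, which turns the pair `ξ = (ξ₁, ξ₂)` of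
functions into a field that can be compared with `fderiv ℝ u`. -/
noncomputable def planeCovector (ξ₁ ξ₂ : ℝ × ℝ → ℝ) (p : ℝ × ℝ) : ℝ × ℝ →L[ℝ] ℝ :=
  ξ₁ p • ContinuousLinearMap.fst ℝ ℝ ℝ + ξ₂ p • ContinuousLinearMap.snd ℝ ℝ ℝ

theorem differentiableAt_planeCovector {ξ₁ ξ₂ : ℝ × ℝ → ℝ} {p : ℝ × ℝ}
    (h₁ : DifferentiableAt ℝ ξ₁ p) (h₂ : DifferentiableAt ℝ ξ₂ p) :
    DifferentiableAt ℝ (planeCovector ξ₁ ξ₂) p :=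
  (h₁.smul_const _).add (h₂.smul_const _)

theorem fderiv_eq_planeCovector (u : ℝ × ℝ → ℝ) : fderiv ℝ u = planeCovector (pdH u) (pdr u) := by
  ext p <;> simp [planeCovector, pdH, pdr]

theorem covectorJacobian_finTwoProd {ω : ℝ × ℝ → ℝ × ℝ →L[ℝ] ℝ} {p : ℝ × ℝ}
    (hω : DifferentiableAt ℝ ω p) :
    covectorJacobian (Basis.finTwoProd ℝ) ω p =
      Dxi (fun q => ω q (1, 0)) (fun q => ω q (0, 1)) p := by
  ext i j
  fin_cases i <;> fin_cases j <;>
    simp [covectorJacobian, Dxi, pdH, pdr, fderiv_clm_apply hω (differentiableAt_const _)]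

theorem covectorJacobian_planeCovector {ξ₁ ξ₂ : ℝ × ℝ → ℝ} {p : ℝ × ℝ}
    (h : DifferentiableAt ℝ (planeCovector ξ₁ ξ₂) p) :
    covectorJacobian (Basis.finTwoProd ℝ) (planeCovector ξ₁ ξ₂) p = Dxi ξ₁ ξ₂ p := by
  simp [covectorJacobian_finTwoProd h, planeCovector]

theorem toMatrix_finTwoProd_eq_smul_adjugate_transpose {L : ℝ × ℝ →ₗ[ℝ] ℝ × ℝ}
    {ξ₁ ξ₂ : ℝ × ℝ → ℝ} {p : ℝ × ℝ} {c : ℝ} (hH : L (1, 0) = (c * pdr ξ₂ p, -(c * pdr ξ₁ p)))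
    (hr : L (0, 1) = (-(c * pdH ξ₂ p), c * pdH ξ₁ p)) :
    LinearMap.toMatrix (Basis.finTwoProd ℝ) (Basis.finTwoProd ℝ) L =
      c • (Dxi ξ₁ ξ₂ p).adjugateᵀ := by
  ext i j
  fin_cases i <;> fin_cases j <;>
    simp [LinearMap.toMatrix_apply, Dxi, adjugate_fin_two_of, hH, hr]

end Plane

/-- Let `ξ = (ξ₁, ξ₂)` be `C¹` on an open subset `B` of the half-plane `{r > 0}` and let
`μ : B → ℝ²` be a `C¹` diffeomorphism onto an open set `U` (with inverse `μinv`) whose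
Jacobian matrix at each `(H, r) ∈ B` is `r·[[∂ξ₂/∂r, −∂ξ₂/∂H], [−∂ξ₁/∂r, ∂ξ₁/∂H]]`.
If `u : U → ℝ` is `C²` with `∇u = ξ ∘ μ⁻¹` on `U`, then at every `x ∈ U` the Hessian
matrix of `u` equals `Dξ·Dξᵗ / (r·det Dξ)` evaluated at `μ⁻¹(x)`. -/
theorem hessian_formula
    (B : Set (ℝ × ℝ)) (hBopen : IsOpen B) (hBhalf : ∀ p ∈ B, 0 < p.2)
    (ξ₁ ξ₂ : ℝ × ℝ → ℝ)
    (hξ₁ : ContDiffOn ℝ 1 ξ₁ B) (hξ₂ : ContDiffOn ℝ 1 ξ₂ B)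
    (μ μinv : ℝ × ℝ → ℝ × ℝ) (U : Set (ℝ × ℝ)) (hUopen : IsOpen U)
    (hμC : ContDiffOn ℝ 1 μ B) (hμinvC : ContDiffOn ℝ 1 μinv U)
    (hμmaps : Set.MapsTo μ B U) (hμinvmaps : Set.MapsTo μinv U B)
    (hleft : ∀ p ∈ B, μinv (μ p) = p) (hright : ∀ x ∈ U, μ (μinv x) = x)
    (hJacH : ∀ p ∈ B, fderiv ℝ μ p (1, 0) = (p.2 * pdr ξ₂ p, -(p.2 * pdr ξ₁ p)))
    (hJacr : ∀ p ∈ B, fderiv ℝ μ p (0, 1) = (-(p.2 * pdH ξ₂ p), p.2 * pdH ξ₁ p))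
    (u : ℝ × ℝ → ℝ) (hu : ContDiffOn ℝ 2 u U)
    (hgrad : ∀ x ∈ U, pdH u x = ξ₁ (μinv x) ∧ pdr u x = ξ₂ (μinv x)) :
    ∀ x ∈ U,
      !![pdH (pdH u) x, pdr (pdH u) x; pdH (pdr u) x, pdr (pdr u) x]
        = ((μinv x).2 * (Dxi ξ₁ ξ₂ (μinv x)).det)⁻¹ •
            (Dxi ξ₁ ξ₂ (μinv x) * (Dxi ξ₁ ξ₂ (μinv x))ᵀ) := by
  intro x hx
  have hp := hμinvmaps hx
  have hU := hUopen.mem_nhds hx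
  have hB := hBopen.mem_nhds hp
  have hξ := differentiableAt_planeCovector ((hξ₁.contDiffAt hB).differentiableAt one_ne_zero)
    ((hξ₂.contDiffAt hB).differentiableAt one_ne_zero)
  have hdu : DifferentiableAt ℝ (fderiv ℝ u) x :=
    ((hu.contDiffAt hU).fderiv_right le_rfl).differentiableAt one_ne_zero
  have hgrad' : ∀ᶠ y in nhds x, HasFDerivAt u (planeCovector ξ₁ ξ₂ (μinv y)) y := by
    filter_upwards [hU] with y hy
    have hy' := ((hu.contDiffAt (hUopen.mem_nhds hy)).differentiableAt two_ne_zero).hasFDerivAt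
    rwa [fderiv_eq_planeCovector, planeCovector, (hgrad y hy).1, (hgrad y hy).2] at hy'
  have hJac := toMatrix_finTwoProd_eq_smul_adjugate_transpose (hJacH _ hp) (hJacr _ hp)
  rw [← covectorJacobian_planeCovector hξ] at hJac ⊢
  exact (covectorJacobian_finTwoProd hdu).symm.trans <|
    hessian_formula_general (Module.Basis.finTwoProd ℝ) hξ
      ((hμC.contDiffAt hB).differentiableAt one_ne_zero)
      ((hμinvC.contDiffAt hU).differentiableAt one_ne_zero)
      (Filter.eventually_of_mem hU hright) hJac hgrad'
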